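/- There exists an absolute constant C > 0 such that for every θ ∈ (0,1) and every positive integer n, ∫_{A} G(s,t,u,v) ds dt du dv ≤ C · n^{2-θ} θ^{-1} (1-θ)^{-3}, and there exists an absolute constant c > 0 such that this integral is ≥ c · n^{2-θ} θ^{-1} (1-θ)^{-3} whenever additionally n^{1-θ} ≥ 8; here A = { (s,t,u,v) ∈ (0,∞)⁴ : 0 < u < 1, n^{-1/2} ≤ v < 1, s < n^{1/4} u^{1/2} v^{1/2}, t ≥ u^{-1/2} v^{-1/2} s }. -/

import Mathlib

open MeasureTheory Set Real

/-- The integrand `G(s,t,u,v)` from the paper's computation of the completely 1-summing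
norm of the identity `OH_n → ℓ^n_p`, with `θ = 2/p'`. Here `p = (s, t, u, v)`. -/
noncomputable def G (θ : ℝ) (n : ℕ) (p : ℝ × ℝ × ℝ × ℝ) : ℝ :=
  (n : ℝ) ^ (2 : ℕ) * p.1 ^ (-1 - 2 * θ) * p.2.1 ^ (-1 - 2 * θ) *
    min (min (min ((n : ℝ)⁻¹ * p.1 ^ (4 : ℝ) * p.2.2.1 ^ (-2 : ℝ) * p.2.2.2 ^ (-2 : ℝ))
                  ((n : ℝ)⁻¹ * p.2.1 ^ (4 : ℝ)))
             (min (p.1 ^ (4 : ℝ) * p.2.2.1 ^ (-2 : ℝ)) (p.2.1 ^ (4 : ℝ) * p.2.2.2 ^ (-2 : ℝ))))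
        (min (min (p.2.2.1 ^ (-2 : ℝ) * p.2.2.2 ^ (-2 : ℝ)) (p.2.2.1 ^ (-2 : ℝ)))
             (min 1 (p.2.2.2 ^ (-2 : ℝ))))

/-- The region of integration. -/
def A (n : ℕ) : Set (ℝ × ℝ × ℝ × ℝ) :=
  {p | 0 < p.1 ∧ 0 < p.2.1 ∧ 0 < p.2.2.1 ∧ 0 < p.2.2.2 ∧ p.2.2.1 < 1 ∧ (n : ℝ) ^ (-(1/2) : ℝ) ≤ p.2.2.2 ∧ p.2.2.2 < 1 ∧ p.1 < (n : ℝ) ^ ((1:ℝ)/4) * p.2.2.1 ^ ((1:ℝ)/2) * p.2.2.2 ^ ((1:ℝ)/2) ∧ p.2.2.1 ^ (-(1/2) : ℝ) * p.2.2.2 ^ (-(1/2) : ℝ) * p.1 ≤ p.2.1}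

lemma aux_tonelli (f : ℝ × ℝ × ℝ × ℝ → ENNReal) (hf : Measurable f) :
    ∫⁻ p, f p = ∫⁻ u, ∫⁻ v, ∫⁻ s, ∫⁻ t, f (s, t, u, v) := by
  have h1 : ∫⁻ p, f p = ∫⁻ s, ∫⁻ q : ℝ × ℝ × ℝ, f (s, q) := by
    rw [Measure.volume_eq_prod]
    exact lintegral_prod _ hf.aemeasurable
  have h2 : ∀ s, ∫⁻ q : ℝ × ℝ × ℝ, f (s, q) = ∫⁻ w : ℝ × ℝ, ∫⁻ t : ℝ, f (s, t, w) := by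
    intro s
    rw [Measure.volume_eq_prod]
    exact lintegral_prod_symm _ (by fun_prop)
  have hm : Measurable (fun z : ℝ × ℝ × ℝ => ∫⁻ t : ℝ, f (z.1, t, z.2)) := by
    apply Measurable.lintegral_prod_right' (f := fun y : (ℝ × ℝ × ℝ) × ℝ => f (y.1.1, y.2, y.1.2))
    fun_prop
  rw [h1]
  simp_rw [h2]
  rw [lintegral_lintegral_swap (f := fun s w => ∫⁻ t : ℝ, f (s, t, w)) hm.aemeasurable]
  rw [Measure.volume_eq_prod ℝ ℝ]
  refine lintegral_prod _ ?_
  apply Measurable.aemeasurable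
  apply Measurable.lintegral_prod_right' (f := fun y : (ℝ × ℝ) × ℝ => ∫⁻ t : ℝ, f (y.2, t, y.1))
  exact hm.comp (by fun_prop : Measurable (fun y : (ℝ × ℝ) × ℝ => (y.2, y.1)))

lemma aux_Ici (T r : ℝ) (hT : 0 < T) (hr : r < -1) :
    ∫⁻ t in Ici T, ENNReal.ofReal (t ^ r) = ENNReal.ofReal (-T ^ (r + 1) / (r + 1)) := by
  rw [setLIntegral_congr (Ioi_ae_eq_Ici (a := T)).symm, ← integral_Ioi_rpow_of_lt hr hT,
    ofReal_integral_eq_lintegral_ofReal (integrableOn_Ioi_rpow_of_lt hr hT)]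
  filter_upwards [ae_restrict_mem measurableSet_Ioi] with t ht
  exact rpow_nonneg (hT.trans ht).le _

lemma aux_Ioo (S r : ℝ) (hS : 0 < S) (hr : -1 < r) :
    ∫⁻ t in Ioo 0 S, ENNReal.ofReal (t ^ r) = ENNReal.ofReal (S ^ (r + 1) / (r + 1)) := by
  have hi : IntervalIntegrable (fun x : ℝ => x ^ r) volume 0 S :=
    intervalIntegral.intervalIntegrable_rpow' hr
  have := integral_rpow (a := 0) (b := S) (r := r) (Or.inl hr)
  rw [zero_rpow (by linarith), sub_zero] at this
  rw [setLIntegral_congr (Ioo_ae_eq_Ioc (a := (0:ℝ)) (b := S)), ← this,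
    intervalIntegral.integral_of_le hS.le,
    ofReal_integral_eq_lintegral_ofReal ((intervalIntegrable_iff_integrableOn_Ioc_of_le hS.le).1 hi)]
  filter_upwards [ae_restrict_mem measurableSet_Ioc] with t ht
  exact rpow_nonneg ht.1.le _

lemma aux_Ico (a r : ℝ) (ha : 0 < a) (ha1 : a ≤ 1) (hr : -1 < r) :
    ∫⁻ t in Ico a 1, ENNReal.ofReal (t ^ r) = ENNReal.ofReal ((1 - a ^ (r + 1)) / (r + 1)) := by
  have hi : IntervalIntegrable (fun x : ℝ => x ^ r) volume a 1 :=
    intervalIntegral.intervalIntegrable_rpow' hr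
  have := integral_rpow (a := a) (b := 1) (r := r) (Or.inl hr)
  rw [one_rpow] at this
  rw [setLIntegral_congr (Ico_ae_eq_Ioc (a := a) (b := 1)), ← this,
    intervalIntegral.integral_of_le ha1,
    ofReal_integral_eq_lintegral_ofReal ((intervalIntegrable_iff_integrableOn_Ioc_of_le ha1).1 hi)]
  filter_upwards [ae_restrict_mem measurableSet_Ioc] with t ht
  exact rpow_nonneg (ha.trans ht.1).le _

lemma aux_ind (f g : ℝ → ENNReal) (s : Set ℝ) (hs : MeasurableSet s)
    (h0 : ∀ x, x ∉ s → f x = 0) (h1 : ∀ x ∈ s, f x = g x) :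
    ∫⁻ x, f x = ∫⁻ x in s, g x := by
  rw [← lintegral_indicator hs]
  congr 1
  ext x
  by_cases hx : x ∈ s
  · rw [indicator_of_mem hx, h1 x hx]
  · rw [indicator_of_notMem hx, h0 x hx]

lemma aux_const (K : ℝ) (hK : 0 ≤ K) (r : ℝ) (s : Set ℝ) :
    ∫⁻ x in s, ENNReal.ofReal (K * x ^ r) =
      ENNReal.ofReal K * ∫⁻ x in s, ENNReal.ofReal (x ^ r) := by
  simp_rw [ENNReal.ofReal_mul hK]
  rw [lintegral_const_mul]
  fun_prop

lemma aux_measA (n : ℕ) : MeasurableSet (A n) := by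
  unfold A
  measurability

lemma aux_measG (θ : ℝ) (n : ℕ) : Measurable (G θ n) := by
  unfold G
  fun_prop

lemma aux_G (θ : ℝ) (n : ℕ) (hn : 0 < n) (s t u v : ℝ) (h : (s, t, u, v) ∈ A n) :
    G θ n (s, t, u, v) = (n * s ^ (3 - 2 * θ) * u ^ (-2 : ℝ) * v ^ (-2 : ℝ)) *
      t ^ (-1 - 2 * θ) := by
  obtain ⟨hs, ht, hu, hv, hu1, hnv, hv1, hS, hT⟩ := h
  simp only at hs ht hu hv hu1 hnv hv1 hS hT
  have hn1 : (1:ℝ) ≤ n := by exact_mod_cast hn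
  have hn0 : (0:ℝ) < n := by linarith
  have hu2 : 1 ≤ u ^ (-2 : ℝ) := one_le_rpow_of_pos_of_le_one_of_nonpos hu hu1.le (by norm_num)
  have hv2 : 1 ≤ v ^ (-2 : ℝ) := one_le_rpow_of_pos_of_le_one_of_nonpos hv hv1.le (by norm_num)
  have hs4 : 0 < s ^ (4:ℝ) := rpow_pos_of_pos hs _
  have ht4 : 0 < t ^ (4:ℝ) := rpow_pos_of_pos ht _
  have hninv : (n:ℝ)⁻¹ ≤ 1 := inv_le_one_of_one_le₀ hn1
  have hninv0 : 0 < (n:ℝ)⁻¹ := by positivity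
  have e1 : s ^ (4:ℝ) * u ^ (-2 : ℝ) * v ^ (-2 : ℝ) ≤ t ^ (4:ℝ) := by
    have := rpow_le_rpow (by positivity) hT (by norm_num : (0:ℝ) ≤ 4)
    rw [mul_rpow (by positivity) hs.le, mul_rpow (by positivity) (by positivity),
      ← rpow_mul hu.le, ← rpow_mul hv.le] at this
    norm_num at this ⊢
    linarith
  have e2 : (n:ℝ)⁻¹ * v ^ (-2 : ℝ) ≤ 1 := by
    have := rpow_le_rpow_of_nonpos (by positivity) hnv (by norm_num : (-2:ℝ) ≤ 0)
    rw [← rpow_mul hn0.le] at this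
    norm_num at this
    rw [inv_mul_le_iff₀ hn0]
    norm_num
    linarith
  have e3 : (n:ℝ)⁻¹ * s ^ (4:ℝ) * u ^ (-2 : ℝ) * v ^ (-2 : ℝ) ≤ 1 := by
    have := rpow_le_rpow hs.le hS.le (by norm_num : (0:ℝ) ≤ 4)
    rw [mul_rpow (by positivity) (by positivity), mul_rpow (by positivity) (by positivity),
      ← rpow_mul hu.le, ← rpow_mul hv.le, ← rpow_mul hn0.le] at this
    norm_num at this
    have k1 : u ^ (-2:ℝ) = (u^2)⁻¹ := by rw [rpow_neg hu.le]; norm_num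
    have k2 : v ^ (-2:ℝ) = (v^2)⁻¹ := by rw [rpow_neg hv.le]; norm_num
    rw [k1, k2]
    have : (n:ℝ)⁻¹ * s ^ (4:ℝ) * (u^2)⁻¹ * (v^2)⁻¹ = s ^ (4:ℝ) / (n * u^2 * v^2) := by
      field_simp
    rw [this, div_le_one (by positivity)]
    norm_num
    assumption
  set U := u ^ (-2 : ℝ)
  set V := v ^ (-2 : ℝ)
  have hmin : min (min (min ((n : ℝ)⁻¹ * s ^ (4 : ℝ) * U * V) ((n : ℝ)⁻¹ * t ^ (4 : ℝ)))
             (min (s ^ (4 : ℝ) * U) (t ^ (4 : ℝ) * V)))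
        (min (min (U * V) U) (min 1 V)) = (n : ℝ)⁻¹ * s ^ (4 : ℝ) * U * V := by
    have f1 : (n : ℝ)⁻¹ * s ^ (4 : ℝ) * U * V ≤ (n : ℝ)⁻¹ * t ^ (4 : ℝ) := by
      have := mul_le_mul_of_nonneg_left e1 hninv0.le
      linarith
    have f2 : (n : ℝ)⁻¹ * s ^ (4 : ℝ) * U * V ≤ s ^ (4 : ℝ) * U := by
      have := mul_le_mul_of_nonneg_left e2 (by positivity : 0 ≤ s ^ (4 : ℝ) * U)
      linarith
    have f3 : (n : ℝ)⁻¹ * t ^ (4 : ℝ) ≤ t ^ (4 : ℝ) * V := by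
      rw [mul_comm]
      exact mul_le_mul_of_nonneg_left (hninv.trans hv2) ht4.le
    have f4 : 1 ≤ U * V := one_le_mul_of_one_le_of_one_le hu2 hv2
    rw [min_eq_left f1, min_eq_left (le_min f2 (f1.trans f3)), min_eq_left]
    exact le_min (le_min (e3.trans f4) (e3.trans hu2)) (le_min e3 (e3.trans hv2))
  simp only [G]
  rw [hmin]
  have : s ^ (3 - 2 * θ) = s ^ (-1 - 2 * θ) * s ^ (4:ℝ) := by
    rw [← rpow_add hs]; congr 1; ring
  rw [this]
  field_simp

lemma aux_value (θ : ℝ) (h0 : 0 < θ) (h1 : θ < 1) (n : ℕ) (hn : 0 < n) :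
    ∫ p in A n, G θ n p = (n : ℝ) ^ (2 - θ) / (8 * θ * (1 - θ) ^ 3) *
      (1 - (n : ℝ) ^ (-(1 - θ) / 2)) := by
  have hn1 : (1:ℝ) ≤ n := by exact_mod_cast hn
  have hn0 : (0:ℝ) < n := by linarith
  have hθ : 0 < 1 - θ := by linarith
  have ha0 : 0 < (n : ℝ) ^ (-(1/2) : ℝ) := rpow_pos_of_pos hn0 _
  have ha1 : (n : ℝ) ^ (-(1/2) : ℝ) ≤ 1 := rpow_le_one_of_one_le_of_nonpos hn1 (by norm_num)
  have hle : (n : ℝ) ^ (-(1 - θ) / 2) ≤ 1 :=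
    rpow_le_one_of_one_le_of_nonpos hn1 (by linarith)
  rw [integral_eq_lintegral_of_nonneg_ae]
  rotate_left
  · filter_upwards [ae_restrict_mem (aux_measA n)] with p hp
    obtain ⟨s, t, u, v⟩ := p
    rw [aux_G θ n hn s t u v hp]
    obtain ⟨hs, ht, hu, hv, -⟩ := hp
    simp only at hs ht hu hv
    simp only [Pi.zero_apply]
    positivity
  · exact (aux_measG θ n).aestronglyMeasurable
  rw [← lintegral_indicator (aux_measA n), aux_tonelli _ ?_]
  swap
  · exact (aux_measG θ n).ennreal_ofReal.indicator (aux_measA n)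
  set F : ℝ × ℝ × ℝ × ℝ → ENNReal := (A n).indicator fun p => ENNReal.ofReal (G θ n p) with hF
  -- the `t` integral
  have It : ∀ u v s, 0 < u → u < 1 → (n : ℝ) ^ (-(1/2) : ℝ) ≤ v → v < 1 → 0 < s →
      s < (n : ℝ) ^ ((1:ℝ)/4) * u ^ ((1:ℝ)/2) * v ^ ((1:ℝ)/2) →
      ∫⁻ t, F (s, t, u, v) =
        ENNReal.ofReal ((n / (2 * θ) * u ^ (θ - 2) * v ^ (θ - 2)) * s ^ (3 - 4 * θ)) := by
    intro u v s hu hu1 hv hv1 hs hS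
    have hv0 : 0 < v := ha0.trans_le hv
    have hT : 0 < u ^ (-(1/2) : ℝ) * v ^ (-(1/2) : ℝ) * s := by positivity
    rw [aux_ind (fun t => F (s, t, u, v))
      (fun t => ENNReal.ofReal ((n * s ^ (3 - 2 * θ) * u ^ (-2 : ℝ) * v ^ (-2 : ℝ)) *
      t ^ (-1 - 2 * θ))) (Ici (u ^ (-(1/2) : ℝ) * v ^ (-(1/2) : ℝ) * s)) measurableSet_Ici]
    · rw [aux_const _ (by positivity), aux_Ici _ _ hT (by linarith),
        ← ENNReal.ofReal_mul (by positivity)]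
      congr 1
      rw [mul_rpow (by positivity) hs.le, mul_rpow (by positivity) (by positivity),
        ← rpow_mul hu.le, ← rpow_mul hv0.le]
      have r1 : u ^ (θ - 2) = u ^ (-2:ℝ) * u ^ (-(1/2) * (-1 - 2 * θ + 1)) := by
        rw [← rpow_add hu]; congr 1; ring
      have r2 : v ^ (θ - 2) = v ^ (-2:ℝ) * v ^ (-(1/2) * (-1 - 2 * θ + 1)) := by
        rw [← rpow_add hv0]; congr 1; ring
      have r3 : s ^ (3 - 4 * θ) = s ^ (3 - 2 * θ) * s ^ (-1 - 2 * θ + 1) := by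
        rw [← rpow_add hs]; congr 1; ring
      rw [r1, r2, r3]
      have r4 : (-1 - 2 * θ + 1) = - (2 * θ) := by ring
      generalize u ^ (-(1/2) * (-1 - 2 * θ + 1)) = a
      generalize v ^ (-(1/2) * (-1 - 2 * θ + 1)) = b
      generalize s ^ (-1 - 2 * θ + 1) = c
      rw [r4, neg_div_neg_eq]
      ring
    · intro t ht
      rw [hF]
      refine indicator_of_notMem (fun h => ht ?_) _
      exact h.2.2.2.2.2.2.2.2
    · intro t ht
      have hm : (s, t, u, v) ∈ A n := ⟨hs, hT.trans_le ht, hu, hv0, hu1, hv, hv1, hS, ht⟩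
      rw [hF, indicator_of_mem hm, aux_G θ n hn s t u v hm]
  have Is : ∀ u v, 0 < u → u < 1 → (n : ℝ) ^ (-(1/2) : ℝ) ≤ v → v < 1 →
      ∫⁻ s, ∫⁻ t, F (s, t, u, v) =
        ENNReal.ofReal ((n ^ (2 - θ) / (8 * θ * (1 - θ)) * u ^ (-θ)) * v ^ (-θ)) := by
    intro u v hu hu1 hv hv1
    have hv0 : 0 < v := ha0.trans_le hv
    have hS : 0 < (n : ℝ) ^ ((1:ℝ)/4) * u ^ ((1:ℝ)/2) * v ^ ((1:ℝ)/2) := by positivity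
    rw [aux_ind _ (fun s =>
        ENNReal.ofReal ((n / (2 * θ) * u ^ (θ - 2) * v ^ (θ - 2)) * s ^ (3 - 4 * θ)))
        (Ioo 0 ((n : ℝ) ^ ((1:ℝ)/4) * u ^ ((1:ℝ)/2) * v ^ ((1:ℝ)/2))) measurableSet_Ioo]
    · rw [aux_const _ (by positivity), aux_Ioo _ _ hS (by linarith),
        ← ENNReal.ofReal_mul (by positivity)]
      congr 1
      rw [mul_rpow (by positivity) (by positivity), mul_rpow (by positivity) (by positivity),
        ← rpow_mul hu.le, ← rpow_mul hv0.le, ← rpow_mul hn0.le]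
      have r1 : u ^ (-θ) = u ^ (θ - 2) * u ^ (1 / 2 * (3 - 4 * θ + 1)) := by
        rw [← rpow_add hu]; congr 1; ring
      have r2 : v ^ (-θ) = v ^ (θ - 2) * v ^ (1 / 2 * (3 - 4 * θ + 1)) := by
        rw [← rpow_add hv0]; congr 1; ring
      have r3 : (n:ℝ) ^ (2 - θ) = n * (n:ℝ) ^ (1 / 4 * (3 - 4 * θ + 1)) := by
        nth_rewrite 2 [← rpow_one (n:ℝ)]
        rw [← rpow_add hn0]; congr 1; ring
      rw [r1, r2, r3]
      have r4 : (3 - 4 * θ + 1) = 4 * (1 - θ) := by ring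
      generalize u ^ (1 / 2 * (3 - 4 * θ + 1)) = a
      generalize v ^ (1 / 2 * (3 - 4 * θ + 1)) = b
      generalize (n:ℝ) ^ (1 / 4 * (3 - 4 * θ + 1)) = c
      rw [r4]
      field_simp
      ring
    · intro s hs
      have : ∀ t, F (s, t, u, v) = 0 := by
        intro t
        refine indicator_of_notMem (fun h => hs ?_) _
        exact ⟨h.1, h.2.2.2.2.2.2.2.1⟩
      simp [this]
    · intro s hs
      exact It u v s hu hu1 hv hv1 hs.1 hs.2
  have Iv : ∀ u, 0 < u → u < 1 →
      ∫⁻ v, ∫⁻ s, ∫⁻ t, F (s, t, u, v) =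
        ENNReal.ofReal ((n ^ (2 - θ) / (8 * θ * (1 - θ) ^ 2) *
          (1 - (n : ℝ) ^ (-(1 - θ) / 2))) * u ^ (-θ)) := by
    intro u hu hu1
    rw [aux_ind _ (fun v =>
        ENNReal.ofReal ((n ^ (2 - θ) / (8 * θ * (1 - θ)) * u ^ (-θ)) * v ^ (-θ)))
        (Ico ((n : ℝ) ^ (-(1/2) : ℝ)) 1) measurableSet_Ico]
    · rw [aux_const _ (by positivity), aux_Ico _ _ ha0 ha1 (by linarith),
        ← ENNReal.ofReal_mul (by positivity)]
      congr 1
      rw [← rpow_mul hn0.le]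
      have r1 : -(1/2) * (-θ + 1) = -(1 - θ) / 2 := by ring
      have r2 : -θ + 1 = 1 - θ := by ring
      rw [r1, r2]
      field_simp
    · intro v hv
      have : ∀ s t, F (s, t, u, v) = 0 := by
        intro s t
        refine indicator_of_notMem (fun h => hv ?_) _
        exact ⟨h.2.2.2.2.2.1, h.2.2.2.2.2.2.1⟩
      simp [this]
    · intro v hv
      exact Is u v hu hu1 hv.1 hv.2
  have hK : 0 ≤ (n:ℝ) ^ (2 - θ) / (8 * θ * (1 - θ) ^ 2) * (1 - (n : ℝ) ^ (-(1 - θ) / 2)) :=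
    mul_nonneg (by positivity) (by linarith)
  rw [aux_ind _ (fun u => ENNReal.ofReal ((n ^ (2 - θ) / (8 * θ * (1 - θ) ^ 2) *
          (1 - (n : ℝ) ^ (-(1 - θ) / 2))) * u ^ (-θ))) (Ioo 0 1) measurableSet_Ioo]
  · rw [aux_const _ hK, aux_Ioo _ _ one_pos (by linarith), ← ENNReal.ofReal_mul hK,
      ENNReal.toReal_ofReal]
    · have r2 : -θ + 1 = 1 - θ := by ring
      rw [one_rpow, r2]
      field_simp
    · rw [one_rpow]
      exact mul_nonneg hK (one_div_nonneg.2 (by linarith))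
  · intro u hu
    have : ∀ v s t, F (s, t, u, v) = 0 := by
      intro v s t
      refine indicator_of_notMem (fun h => hu ?_) _
      exact ⟨h.2.2.1, h.2.2.2.2.1⟩
    simp [this]
  · intro u hu
    exact Iv u hu.1 hu.2

theorem stmt_8 :
    (∃ C : ℝ, 0 < C ∧ ∀ θ : ℝ, 0 < θ → θ < 1 → ∀ n : ℕ, 0 < n →
      (∫ p in A n, G θ n p) ≤ C * ((n : ℝ) ^ (2 - θ) * θ ^ (-1 : ℝ) * (1 - θ) ^ (-3 : ℝ))) ∧
    (∃ c : ℝ, 0 < c ∧ ∀ θ : ℝ, 0 < θ → θ < 1 → ∀ n : ℕ, 0 < n →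
      (8 : ℝ) ≤ (n : ℝ) ^ (1 - θ) →
      c * ((n : ℝ) ^ (2 - θ) * θ ^ (-1 : ℝ) * (1 - θ) ^ (-3 : ℝ)) ≤ ∫ p in A n, G θ n p) := by
  have key : ∀ θ : ℝ, 0 < θ → θ < 1 → ∀ n : ℕ, 0 < n → ∫ p in A n, G θ n p =
      (1 / 8 * (1 - (n : ℝ) ^ (-(1 - θ) / 2))) *
        ((n : ℝ) ^ (2 - θ) * θ ^ (-1 : ℝ) * (1 - θ) ^ (-3 : ℝ)) := by
    intro θ h0 h1 n hn
    have hθ : 0 < 1 - θ := by linarith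
    rw [aux_value θ h0 h1 n hn, rpow_neg h0.le, rpow_neg hθ.le, rpow_one]
    have : (1 - θ) ^ (3:ℝ) = (1 - θ) ^ 3 := by norm_cast
    rw [this]
    field_simp
  refine ⟨⟨1 / 8, by norm_num, ?_⟩, ⟨1 / 16, by norm_num, ?_⟩⟩
  · intro θ h0 h1 n hn
    have hθ : 0 < 1 - θ := by linarith
    have hn0 : (0:ℝ) < n := by exact_mod_cast hn
    rw [key θ h0 h1 n hn]
    apply mul_le_mul_of_nonneg_right _ (by positivity)
    have : 0 ≤ (n : ℝ) ^ (-(1 - θ) / 2) := by positivity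
    linarith
  · intro θ h0 h1 n hn h8
    have hθ : 0 < 1 - θ := by linarith
    have hn0 : (0:ℝ) < n := by exact_mod_cast hn
    rw [key θ h0 h1 n hn]
    apply mul_le_mul_of_nonneg_right _ (by positivity)
    have hx : 0 < (n : ℝ) ^ (-(1 - θ) / 2) := by positivity
    have hp : (n : ℝ) ^ (-(1 - θ) / 2) * (n : ℝ) ^ (-(1 - θ) / 2) * (n : ℝ) ^ (1 - θ) = 1 := by
      rw [← rpow_add hn0, ← rpow_add hn0]
      ring_nf
      exact rpow_zero _
    have : (n : ℝ) ^ (-(1 - θ) / 2) ≤ 1 / 2 := by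
      by_contra hc
      push Not at hc
      nlinarith [mul_le_mul_of_nonneg_left h8 (mul_pos hx hx).le]
    linarith
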